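/- Let f > 0, g > 0 be real numbers and let θ be a real number with 0 ≤ θ < 1. Then ln(1 + f/g) ≤ (1 − θ)·(f/g) − (θ + ln(1 − θ)). -/

import Mathlib

theorem log_add_log_le_mul_sub_one {x y : ℝ} (hx : 0 < x) (hy : 0 < y) :
    Real.log x + Real.log y ≤ x * y - 1 := by
  rw [← Real.log_mul hx.ne' hy.ne']
  exact Real.log_le_sub_one_of_pos (mul_pos hx hy)

theorem lagrangian_dual_transform_upper_bound_general {x θ : ℝ} (hx : -1 < x) (hθ : θ < 1) :
    Real.log (1 + x) ≤ (1 - θ) * x - (θ + Real.log (1 - θ)) := by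
  have log_sum_le : Real.log (1 - θ) + Real.log (1 + x) ≤ (1 - θ) * (1 + x) - 1 :=
    log_add_log_le_mul_sub_one (sub_pos.mpr hθ) (neg_lt_iff_pos_add'.mp hx)
  linarith

/-- Lagrangian dual transform upper bound (Lemma 2, first inequality):
for positive reals `f, g` and `θ ∈ [0,1)`,
`ln(1 + f/g) ≤ (1 − θ)(f/g) − (θ + ln(1 − θ))`. -/
theorem lagrangian_dual_transform_upper_bound (f g θ : ℝ) (hf : 0 < f) (hg : 0 < g)
    (hθ0 : 0 ≤ θ) (hθ1 : θ < 1) :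
    Real.log (1 + f / g) ≤ (1 - θ) * (f / g) - (θ + Real.log (1 - θ)) :=
  lagrangian_dual_transform_upper_bound_general (neg_one_lt_zero.trans (div_pos hf hg)) hθ1
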